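/- arXiv:2310.00414 — 2 statements merged into one kernel-verified Lean document; each statement's English description precedes it below -/
import Mathlib

section
/- Let Γ be a reduced labeled graph with all labels positive, and let γ = (e₁,…,eₛ,e) be a strict monotone cycle in Γ for some s ≥ 0. Suppose Γ′ is a reduced labeled graph obtained from Γ by a single slide move of one of the edges e, ē, eᵢ or ēᵢ (for some 1 ≤ i ≤ s) over an oriented edge f with f ∉ {e, ē}. Then Γ′ contains a strict monotone cycle. -/
/-! Labeled graphs in the sense of generalized Baumslag–Solitar theory. -/

structure LGraph (V E : Type) where
  o : E → V
  bar : E → E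
  bar_bar : ∀ e, bar (bar e) = e
  bar_ne : ∀ e, bar e ≠ e
  lab : E → ℤ

namespace LGraph

variable {V E V' E' : Type}

/-- Terminal vertex of an oriented edge. -/
def t (G : LGraph V E) (e : E) : V := G.o (G.bar e)

/-- All labels are positive. -/
def Positive (G : LGraph V E) : Prop := ∀ e : E, 0 < G.lab e

/-- No collapsible edge: every label-1 edge is a loop. -/
def Reduced (G : LGraph V E) : Prop := ∀ e : E, G.lab e = 1 → G.o e = G.t e

/-- An `n`-rose: one vertex and `n` pairs of oriented edges. -/
def IsRose (G : LGraph V E) (n : ℕ) : Prop :=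
  Nat.card V = 1 ∧ Nat.card E = 2 * n

/-- Modulus of a single oriented edge: `λ(ē)/λ(e)`. -/
def qe (G : LGraph V E) (e : E) : ℚ := (G.lab (G.bar e) : ℚ) / (G.lab e : ℚ)

/-- Modulus of an edge path. -/
def q (G : LGraph V E) (l : List E) : ℚ := (l.map G.qe).prod

/-- Consecutive edges match up. -/
def IsEdgePath (G : LGraph V E) (l : List E) : Prop :=
  List.Chain' (fun a b => G.t a = G.o b) l

/-- An `e`-edge path. -/
def IsEEdgePath (G : LGraph V E) (e : E) (l : List E) : Prop :=
  G.IsEdgePath l ∧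
  (∀ a ∈ l, a ≠ e ∧ a ≠ G.bar e) ∧
  (∀ a ∈ l.head?, G.o a = G.o e) ∧
  ∀ i : Fin l.length, ∃ k : ℤ,
    (G.lab e : ℚ) * G.q (l.take i.1) = (k : ℚ) * (G.lab (l.get i) : ℚ)

/-- A monotone cycle `(e₁,…,eₛ,e)`. -/
def IsMonotoneCycle (G : LGraph V E) (l : List E) (e : E) : Prop :=
  G.IsEEdgePath (G.bar e) l ∧
  G.t (l.getLastD e) = G.o e ∧
  ∃ k : ℤ, G.q (l ++ [e]) = (k : ℚ)

/-- A strict monotone cycle. -/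
def IsStrictMonotoneCycle (G : LGraph V E) (l : List E) (e : E) : Prop :=
  G.IsMonotoneCycle l e ∧ G.q (l ++ [e]) ≠ 1

def HasStrictMonotoneCycle (G : LGraph V E) : Prop :=
  ∃ (l : List E) (e : E), G.IsStrictMonotoneCycle l e

/-- A strict `e`-integer cycle. -/
def IsStrictIntegerCycle (G : LGraph V E) (e : E) (l : List E) : Prop :=
  G.IsEEdgePath e l ∧ l ≠ [] ∧
  G.t (l.getLastD e) = G.o (l.headD e) ∧
  (∃ k : ℤ, G.q l = (k : ℚ)) ∧ G.q l ≠ 1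

/-- A mobile edge. -/
def Mobile (G : LGraph V E) (e : E) : Prop :=
  (∃ l, G.IsStrictMonotoneCycle l e ∨ G.IsStrictMonotoneCycle l (G.bar e)) ∨
  (∃ l, G.IsStrictIntegerCycle e l ∨ G.IsStrictIntegerCycle (G.bar e) l)

/-- The single slide of `e` over `f` is permitted. -/
def CanSlide (G : LGraph V E) (e f : E) : Prop :=
  f ≠ e ∧ f ≠ G.bar e ∧ G.o f = G.o e ∧ G.lab f ∣ G.lab e

open Classical in
/-- The result of the single slide of `e` over `f`. -/
noncomputable def slide (G : LGraph V E) (e f : E) : LGraph V E where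
  o := fun x => if x = e then G.t f else G.o x
  bar := G.bar
  bar_bar := G.bar_bar
  bar_ne := G.bar_ne
  lab := fun x => if x = e then G.lab e * G.lab (G.bar f) / G.lab f else G.lab x

/-- Successively slide `e` over the edges of a path. -/
noncomputable def slidePath : LGraph V E → E → List E → LGraph V E
  | G, _, [] => G
  | G, e, f :: l => slidePath (G.slide e f) e l

/-- Each single slide in the successive slide of `e` over a path is permitted. -/
def CanSlidePath : LGraph V E → E → List E → Prop
  | _, _, [] => True
  | G, e, f :: l => G.CanSlide e f ∧ CanSlidePath (G.slide e f) e l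

/-- Each single slide is permitted and each intermediate graph is reduced. -/
def GoodSlidePath : LGraph V E → E → List E → Prop
  | _, _, [] => True
  | G, e, f :: l => G.CanSlide e f ∧ (G.slide e f).Reduced ∧ GoodSlidePath (G.slide e f) e l

/-- Perform a finite sequence of single slides, given as pairs (slid edge, edge slid over). -/
noncomputable def slideSeq : LGraph V E → List (E × E) → LGraph V E
  | G, [] => G
  | G, p :: rest => slideSeq (G.slide p.1 p.2) rest

/-- A sequence of permitted single slides, each sliding a mobile edge. -/
def MobileSlideSeq : LGraph V E → List (E × E) → Prop
  | _, [] => True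
  | G, p :: rest => G.Mobile p.1 ∧ G.CanSlide p.1 p.2 ∧ MobileSlideSeq (G.slide p.1 p.2) rest

/-- Isomorphism of labeled graphs. -/
def Isom (G : LGraph V E) (G' : LGraph V' E') : Prop :=
  ∃ (φ : V → V') (Φ : E → E'),
    Function.Bijective φ ∧ Function.Bijective Φ ∧
    (∀ x, G'.o (Φ x) = φ (G.o x)) ∧
    (∀ x, G'.bar (Φ x) = Φ (G.bar x)) ∧
    (∀ x, G'.lab (Φ x) = G.lab x)

open Classical in
/-- The result of the induction move at the loop `e` with multiplier `m`. -/
noncomputable def inductionMove (G : LGraph V E) (e : E) (m : ℤ) : LGraph V E where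
  o := G.o
  bar := G.bar
  bar_bar := G.bar_bar
  bar_ne := G.bar_ne
  lab := fun x => if x ≠ e ∧ x ≠ G.bar e ∧ G.o x = G.o e then m * G.lab x else G.lab x

/-- `G'` is obtained from `G` by a single slide move (up to isomorphism). -/
def IsSlideMove (G : LGraph V E) (G' : LGraph V' E') : Prop :=
  ∃ e f, G.CanSlide e f ∧ Isom G' (G.slide e f)

/-- `G'` is obtained from `G` by a (forward) induction move. -/
def IsInductionMove (G : LGraph V E) (G' : LGraph V' E') : Prop :=
  ∃ (e : E) (m : ℤ), G.o e = G.t e ∧ G.lab e = 1 ∧ 1 ≤ m ∧ m ∣ G.lab (G.bar e) ∧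
    Isom G' (G.inductionMove e m)

/-- `G'` is obtained from `G` by an A-move. -/
def IsAMove (G : LGraph V E) (G' : LGraph V' E') : Prop :=
  ∃ (e d : E) (e' : E') (φ : V → V') (Φ : E → E'),
    G.o e = G.t e ∧ G.lab e = 1 ∧ G.lab (G.bar e) ≠ 1 ∧
    G.o d = G.o e ∧ G.t d ≠ G.o e ∧
    G.lab d ≠ 1 ∧ G.lab (G.bar d) ≠ 1 ∧ G.lab d ∣ G.lab (G.bar e) ∧
    (∀ x : E, G.o x = G.o e → x = e ∨ x = G.bar e ∨ x = d) ∧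
    G'.o e' = φ (G.t d) ∧ G'.t e' = φ (G.t d) ∧
    G'.lab e' = G.lab (G.bar d) ∧
    G'.lab (G'.bar e') = G.lab (G.bar d) * G.lab (G.bar e) ∧
    (∀ w₁ w₂ : V, w₁ ≠ G.o e → w₂ ≠ G.o e → φ w₁ = φ w₂ → w₁ = w₂) ∧
    (∀ v' : V', ∃ w : V, w ≠ G.o e ∧ φ w = v') ∧
    (∀ x : E, x ≠ e → x ≠ G.bar e → x ≠ d → x ≠ G.bar d →
      Φ x ≠ e' ∧ Φ x ≠ G'.bar e' ∧
      G'.o (Φ x) = φ (G.o x) ∧ G'.bar (Φ x) = Φ (G.bar x) ∧ G'.lab (Φ x) = G.lab x) ∧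
    (∀ x y : E, x ≠ e → x ≠ G.bar e → x ≠ d → x ≠ G.bar d →
      y ≠ e → y ≠ G.bar e → y ≠ d → y ≠ G.bar d → Φ x = Φ y → x = y) ∧
    (∀ y : E', y ≠ e' → y ≠ G'.bar e' →
      ∃ x : E, x ≠ e ∧ x ≠ G.bar e ∧ x ≠ d ∧ x ≠ G.bar d ∧ Φ x = y)

/-- A strict ascending loop: a loop with `λ(e) = 1 ≠ λ(ē)`. -/
def HasStrictAscendingLoop (G : LGraph V E) : Prop :=
  ∃ e : E, G.o e = G.t e ∧ G.lab e = 1 ∧ G.lab (G.bar e) ≠ 1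

end LGraph

/-- A labeled graph with its vertex and edge types bundled. -/
structure BGraph where
  V : Type
  E : Type
  G : LGraph V E

/-- An elementary deformation move: a slide, an induction move or its inverse,
or an A-move or its inverse. -/
def BGraph.ElemMove (X Y : BGraph) : Prop :=
  LGraph.IsSlideMove X.G Y.G ∨ LGraph.IsInductionMove X.G Y.G ∨
  LGraph.IsInductionMove Y.G X.G ∨ LGraph.IsAMove X.G Y.G ∨ LGraph.IsAMove Y.G X.G

/-- A finite sequence of elementary moves with all intermediate graphs reduced. -/
def BGraph.MoveSeq : BGraph → BGraph → Prop :=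
  Relation.ReflTransGen (fun X Y => X.ElemMove Y ∧ Y.G.Reduced)

/-- A reduced labeled graph is non-ascending if no reduced labeled graph obtained from it
by slide, induction and A-moves (all intermediate graphs reduced) contains a
strict ascending loop. -/
def LGraph.NonAscending {V E : Type} (G : LGraph V E) : Prop :=
  ∀ Y : BGraph, BGraph.MoveSeq ⟨V, E, G⟩ Y → ¬ Y.G.HasStrictAscendingLoop

/-!
A pair `(v, n) : V × ℤ` stands for the power `aᵥⁿ` of the generator of the vertex group at `v` in
the associated generalized Baumslag–Solitar group. An edge `x` conjugates the `m * λ(x)`-th power at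
`o(x)` to the `m * λ(x̄)`-th power at `t(x)`. Hence `e` closes up a strict monotone cycle exactly
when, for some integer `k ≠ 1`, the pairs `(t(e), λ(ē))` and `(o(e), k * λ(e))` are joined by
conjugations along edges outside `{e, ē}`. When `g` slides over `f ∉ {e, ē}`, conjugation along `f`
carries the old end of `g`, with all multiples of its label, to the new one, so old conjugations
can be imitated in the new graph with `k` unchanged.
-/

namespace LGraph

variable {V E : Type} {G : LGraph V E} {e f g : E}

section Transport

/-- Elementary conjugation of vertex group elements along an edge outside `{e, ē}`, the pair
`(v, n)` encoding the `n`-th power of the generator at `v`. -/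
inductive TransportStep (G : LGraph V E) (e : E) : V × ℤ → V × ℤ → Prop
  | along (x : E) (hx : x ≠ e) (hx_bar : x ≠ G.bar e) (m : ℤ) :
    TransportStep G e (G.o x, m * G.lab x) (G.t x, m * G.lab (G.bar x))

/-- Conjugacy of vertex group elements by a succession of edges outside `{e, ē}`. -/
def Transport (G : LGraph V E) (e : E) : V × ℤ → V × ℤ → Prop :=
  Relation.ReflTransGen (G.TransportStep e)

theorem bar_eq_iff {x y : E} : G.bar x = y ↔ x = G.bar y :=
  Function.Involutive.eq_iff G.bar_bar

theorem t_bar (x : E) : G.t (G.bar x) = G.o x := by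
  rw [t, G.bar_bar]

theorem TransportStep.symm {p p' : V × ℤ} (h : G.TransportStep e p p') :
    G.TransportStep e p' p := by
  obtain ⟨x, hx, hx_bar, m⟩ := h
  have hstep := TransportStep.along (G := G) (e := e) (G.bar x)
    (mt bar_eq_iff.mp hx_bar) ((Function.Involutive.injective G.bar_bar).ne hx) m
  rwa [t_bar, G.bar_bar] at hstep

theorem Transport.symm {p p' : V × ℤ} (h : G.Transport e p p') : G.Transport e p' p :=
  have : Std.Symm (G.TransportStep e) := ⟨fun _ _ => TransportStep.symm⟩
  Relation.ReflTransGen.stdSymm.symm _ _ h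

end Transport

section Path

variable {v w : V} {n m : ℤ} {a : E} {l : List E}

theorem q_cons (a : E) (l : List E) : G.q (a :: l) = G.qe a * G.q l := by
  simp only [q, List.map_cons, List.prod_cons]

theorem q_concat (l : List E) (a : E) : G.q (l ++ [a]) = G.q l * G.qe a := by
  simp only [q, List.map_append, List.map_cons, List.map_nil, List.prod_append, List.prod_singleton]

theorem mul_lab_mul_q_cons (ha : G.lab a ≠ 0) (k : ℤ) (l : List E) :
    ((k * G.lab a : ℤ) : ℚ) * G.q (a :: l) = ((k * G.lab (G.bar a) : ℤ) : ℚ) * G.q l := by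
  have ha' : (G.lab a : ℚ) ≠ 0 := Int.cast_ne_zero.mpr ha
  rw [q_cons, qe]
  push_cast
  field_simp

/-- The divisibility condition of an edge path, for an arbitrary initial label `n` in place of the
label of an edge. -/
def IsIntegralAlong (G : LGraph V E) (n : ℤ) (l : List E) : Prop :=
  ∀ i : Fin l.length, ∃ k : ℤ, (n : ℚ) * G.q (l.take i.1) = (k : ℚ) * (G.lab (l.get i) : ℚ)

theorem isIntegralAlong_nil : G.IsIntegralAlong n [] :=
  fun i => i.elim0

theorem isIntegralAlong_cons (ha : G.lab a ≠ 0) :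
    G.IsIntegralAlong n (a :: l) ↔
      ∃ k : ℤ, n = k * G.lab a ∧ G.IsIntegralAlong (k * G.lab (G.bar a)) l := by
  have hhead (k : ℤ) : (n : ℚ) * G.q [] = k * (G.lab a : ℚ) ↔ n = k * G.lab a := by
    rw [q, List.map_nil, List.prod_nil, mul_one]
    exact_mod_cast Iff.rfl
  have htail (k : ℤ) (hn : n = k * G.lab a) :
      (∀ i : Fin l.length, ∃ j : ℤ,
        (n : ℚ) * G.q (a :: l.take i) = j * (G.lab (l.get i) : ℚ)) ↔
      G.IsIntegralAlong (k * G.lab (G.bar a)) l := by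
    simp only [hn, mul_lab_mul_q_cons ha, IsIntegralAlong]
  calc G.IsIntegralAlong n (a :: l)
    _ ↔ (∃ k : ℤ, (n : ℚ) * G.q [] = k * (G.lab a : ℚ)) ∧
        ∀ i : Fin l.length, ∃ j : ℤ,
          (n : ℚ) * G.q (a :: l.take i) = j * (G.lab (l.get i) : ℚ) := Fin.forall_fin_succ
    _ ↔ _ := by
      simp only [hhead, ← exists_and_right]
      exact exists_congr fun k => and_congr_right (htail k)

/-- An edge path outside `{e, ē}` carrying the pair `(v, n)` to `(w, m)`; this is an `e`-edge path
with its initial vertex and label decoupled from `e`, so that its tails are of the same kind. -/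
structure IsTransportPath (G : LGraph V E) (e : E) (v : V) (n : ℤ) (l : List E) (w : V) (m : ℤ) :
    Prop where
  isEdgePath : G.IsEdgePath l
  avoids : ∀ a ∈ l, a ≠ e ∧ a ≠ G.bar e
  o_head : ∀ a ∈ l.head?, G.o a = v
  isIntegralAlong : G.IsIntegralAlong n l
  t_last : (l.map G.t).getLastD v = w
  mul_q : (n : ℚ) * G.q l = m

theorem isTransportPath_nil (G : LGraph V E) (e : E) (v : V) (n : ℤ) :
    G.IsTransportPath e v n [] v n where
  isEdgePath := List.isChain_nil
  avoids := List.forall_mem_nil _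
  o_head := by simp only [List.head?_nil, Option.not_mem_none, false_imp_iff, implies_true]
  isIntegralAlong := isIntegralAlong_nil
  t_last := rfl
  mul_q := mul_one _

theorem IsTransportPath.cons (ha : G.lab a ≠ 0) (hae : a ≠ e) (hae_bar : a ≠ G.bar e) {k : ℤ}
    (h : G.IsTransportPath e (G.t a) (k * G.lab (G.bar a)) l w m) :
    G.IsTransportPath e (G.o a) (k * G.lab a) (a :: l) w m where
  isEdgePath := List.isChain_cons.mpr ⟨fun b hb => (h.o_head b hb).symm, h.isEdgePath⟩
  avoids := List.forall_mem_cons.mpr ⟨⟨hae, hae_bar⟩, h.avoids⟩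
  o_head := by simp only [List.head?_cons, Option.mem_some_iff, forall_eq']
  isIntegralAlong := (isIntegralAlong_cons ha).mpr ⟨k, rfl, h.isIntegralAlong⟩
  t_last := by rw [List.map_cons, List.getLastD_cons, h.t_last]
  mul_q := by rw [mul_lab_mul_q_cons ha, h.mul_q]

theorem IsTransportPath.exists_tail (ha : G.lab a ≠ 0)
    (h : G.IsTransportPath e v n (a :: l) w m) :
    ∃ k : ℤ, n = k * G.lab a ∧ G.IsTransportPath e (G.t a) (k * G.lab (G.bar a)) l w m := by
  obtain ⟨hjoin, hpath⟩ := List.isChain_cons.mp h.isEdgePath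
  obtain ⟨k, rfl, hintegral⟩ := (isIntegralAlong_cons ha).mp h.isIntegralAlong
  exact ⟨k, rfl, {
    isEdgePath := hpath
    avoids := (List.forall_mem_cons.mp h.avoids).2
    o_head := fun b hb => (hjoin b hb).symm
    isIntegralAlong := hintegral
    t_last := by rw [← h.t_last, List.map_cons, List.getLastD_cons]
    mul_q := by rw [← h.mul_q, mul_lab_mul_q_cons ha] }⟩

theorem IsTransportPath.transport (hlab : ∀ x, G.lab x ≠ 0)
    (h : G.IsTransportPath e v n l w m) : G.Transport e (v, n) (w, m) := by
  induction l generalizing v n with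
  | nil =>
    have hv : v = w := h.t_last
    have hn : n = m := by exact_mod_cast (mul_one (n : ℚ)).symm.trans h.mul_q
    rw [hv, hn]
    exact Relation.ReflTransGen.refl
  | cons a l ih =>
    obtain ⟨hae, hae_bar⟩ := h.avoids a List.mem_cons_self
    obtain rfl : G.o a = v := h.o_head a rfl
    obtain ⟨k, rfl, htail⟩ := h.exists_tail (hlab a)
    exact .head (.along a hae hae_bar k) (ih htail)

theorem Transport.exists_isTransportPath (hlab : ∀ x, G.lab x ≠ 0) {p p' : V × ℤ}
    (h : G.Transport e p p') : ∃ l, G.IsTransportPath e p.1 p.2 l p'.1 p'.2 := by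
  induction h using Relation.ReflTransGen.head_induction_on with
  | refl => exact ⟨[], isTransportPath_nil G e _ _⟩
  | head hstep _ ih =>
    obtain ⟨x, hx, hx_bar, k⟩ := hstep
    obtain ⟨l, hl⟩ := ih
    exact ⟨x :: l, hl.cons (hlab x) hx hx_bar⟩

theorem q_concat_eq_intCast_iff (he : G.lab e ≠ 0) (l : List E) (k : ℤ) :
    G.q (l ++ [e]) = k ↔ (G.lab (G.bar e) : ℚ) * G.q l = ((k * G.lab e : ℤ) : ℚ) := by
  rw [q_concat, qe, ← mul_div_assoc, div_eq_iff (Int.cast_ne_zero.mpr he), mul_comm, Int.cast_mul]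

theorem isStrictMonotoneCycle_iff_isTransportPath (he : G.lab e ≠ 0) :
    G.IsStrictMonotoneCycle l e ↔
      ∃ k : ℤ, k ≠ 1 ∧
        G.IsTransportPath e (G.t e) (G.lab (G.bar e)) l (G.o e) (k * G.lab e) := by
  constructor
  · rintro ⟨⟨⟨hpath, havoid, hhead, hintegral⟩, hlast, k, hk⟩, hstrict⟩
    refine ⟨k, fun hk_one => hstrict (by rw [hk, hk_one, Int.cast_one]), {
      isEdgePath := hpath
      avoids := fun a ha => ?_
      o_head := hhead
      isIntegralAlong := hintegral
      t_last := List.getLastD_map.trans hlast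
      mul_q := (q_concat_eq_intCast_iff he l k).mp hk }⟩
    simpa only [G.bar_bar] using (havoid a ha).symm
  · rintro ⟨k, hk_one, h⟩
    have hk : G.q (l ++ [e]) = k := (q_concat_eq_intCast_iff he l k).mpr h.mul_q
    refine ⟨⟨⟨h.isEdgePath, fun a ha => ?_, h.o_head, h.isIntegralAlong⟩,
      List.getLastD_map.symm.trans h.t_last, k, hk⟩, ?_⟩
    · simpa only [G.bar_bar] using (h.avoids a ha).symm
    · exact hk ▸ mt Int.cast_eq_one.mp hk_one

theorem exists_isStrictMonotoneCycle_iff_transport (hlab : ∀ x, G.lab x ≠ 0) (e : E) :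
    (∃ l, G.IsStrictMonotoneCycle l e) ↔
      ∃ k : ℤ, k ≠ 1 ∧ G.Transport e (G.t e, G.lab (G.bar e)) (G.o e, k * G.lab e) := by
  simp only [isStrictMonotoneCycle_iff_isTransportPath (hlab e)]
  constructor
  · rintro ⟨l, k, hk, h⟩
    exact ⟨k, hk, h.transport hlab⟩
  · rintro ⟨k, hk, h⟩
    obtain ⟨l, hl⟩ := h.exists_isTransportPath hlab
    exact ⟨l, k, hk, hl⟩

end Path

section Slide

theorem slide_o_self (G : LGraph V E) (g f : E) : (G.slide g f).o g = G.t f :=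
  if_pos rfl

theorem slide_o_of_ne {x : E} (hx : x ≠ g) : (G.slide g f).o x = G.o x :=
  if_neg hx

theorem slide_lab_self {c : ℤ} (hf : G.lab f ≠ 0) (hc : G.lab g = c * G.lab f) :
    (G.slide g f).lab g = c * G.lab (G.bar f) := by
  have hself : (G.slide g f).lab g = G.lab g * G.lab (G.bar f) / G.lab f := if_pos rfl
  rw [hself, hc, mul_right_comm, Int.mul_ediv_cancel _ hf]

theorem slide_lab_of_ne {x : E} (hx : x ≠ g) : (G.slide g f).lab x = G.lab x :=
  if_neg hx

theorem CanSlide.slide_lab_ne_zero (hlab : ∀ x, G.lab x ≠ 0) (h : G.CanSlide g f) (x : E) :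
    (G.slide g f).lab x ≠ 0 := by
  obtain ⟨-, -, -, c, hc⟩ := h
  rw [mul_comm] at hc
  by_cases hx : x = g
  · rw [hx, slide_lab_self (hlab f) hc]
    exact mul_ne_zero (left_ne_zero_of_mul (hc ▸ hlab g)) (hlab _)
  · rw [slide_lab_of_ne hx]
    exact hlab x

theorem CanSlide.transport_slide_end (hf : G.lab f ≠ 0) (h : G.CanSlide g f) (hfe : f ≠ e)
    (hfe_bar : f ≠ G.bar e) (x : E) (m : ℤ) :
    (G.slide g f).Transport e (G.o x, m * G.lab x)
      ((G.slide g f).o x, m * (G.slide g f).lab x) := by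
  by_cases hx : x = g
  · obtain ⟨hfg, hfg_bar, hof, c, hc⟩ := h
    rw [mul_comm] at hc
    have hbar_fg : G.bar f ≠ g := mt bar_eq_iff.mp hfg_bar
    have hstep := TransportStep.along (G := G.slide g f) f hfe hfe_bar (m * c)
    have ht : (G.slide g f).t f = G.t f := slide_o_of_ne hbar_fg
    have hbar : (G.slide g f).lab ((G.slide g f).bar f) = G.lab (G.bar f) :=
      slide_lab_of_ne hbar_fg
    rw [slide_o_of_ne hfg, slide_lab_of_ne hfg, ht, hbar, hof, mul_assoc, mul_assoc, ← hc,
      ← slide_lab_self hf hc, ← slide_o_self G g f] at hstep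
    rw [hx]
    exact .single hstep
  · rw [slide_o_of_ne hx, slide_lab_of_ne hx]
    exact .refl

theorem TransportStep.slide (hf : G.lab f ≠ 0) (hcan : G.CanSlide g f) (hfe : f ≠ e)
    (hfe_bar : f ≠ G.bar e) {p p' : V × ℤ} (h : G.TransportStep e p p') :
    (G.slide g f).Transport e p p' := by
  obtain ⟨x, hx, hx_bar, m⟩ := h
  have hends := hcan.transport_slide_end hf hfe hfe_bar
  have hcross := TransportStep.along (G := G.slide g f) x hx hx_bar m
  exact ((hends x m).tail hcross).trans (hends (G.bar x) m).symm

theorem Transport.slide (hf : G.lab f ≠ 0) (hcan : G.CanSlide g f) (hfe : f ≠ e)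
    (hfe_bar : f ≠ G.bar e) {p p' : V × ℤ} (h : G.Transport e p p') :
    (G.slide g f).Transport e p p' :=
  Relation.reflTransGen_closed (fun _ _ => TransportStep.slide hf hcan hfe hfe_bar) _ _ h

end Slide

end LGraph

theorem stmt0_general {V E : Type} {G : LGraph V E} (hlab : ∀ x, G.lab x ≠ 0) {l : List E}
    {e g f : E} (hsmc : G.IsStrictMonotoneCycle l e) (hfe : f ≠ e) (hfe_bar : f ≠ G.bar e)
    (hcan : G.CanSlide g f) :
    ∃ l', (G.slide g f).IsStrictMonotoneCycle l' e := by
  obtain ⟨k, hk, htransport⟩ :=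
    (LGraph.exists_isStrictMonotoneCycle_iff_transport hlab e).mp ⟨l, hsmc⟩
  have hends := hcan.transport_slide_end (hlab f) hfe hfe_bar
  have hstart : (G.slide g f).Transport e (G.t e, G.lab (G.bar e))
      ((G.slide g f).t e, (G.slide g f).lab (G.bar e)) := by
    have hend := hends (G.bar e) 1
    rwa [one_mul, one_mul] at hend
  exact (LGraph.exists_isStrictMonotoneCycle_iff_transport (hcan.slide_lab_ne_zero hlab) e).mpr
    ⟨k, hk, hstart.symm.trans ((htransport.slide (hlab f) hcan hfe hfe_bar).trans (hends e k))⟩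

/-- If a reduced, positively-labeled graph `Γ` has a strict monotone cycle
`(e₁,…,eₛ,e)` and a reduced `Γ'` is obtained by a single slide of one of `e, ē, eᵢ, ēᵢ`
over an edge `f ∉ {e, ē}`, then `Γ'` contains a strict monotone cycle. -/
theorem stmt0 {V E : Type} [Finite V] [Finite E] (G : LGraph V E)
    (hpos : G.Positive) (hred : G.Reduced)
    (l : List E) (e : E) (hsmc : G.IsStrictMonotoneCycle l e)
    (g f : E)
    (hg : g = e ∨ g = G.bar e ∨ g ∈ l ∨ G.bar g ∈ l)
    (hfe : f ≠ e) (hfebar : f ≠ G.bar e)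
    (hcan : G.CanSlide g f)
    (hred' : (G.slide g f).Reduced) :
    (G.slide g f).HasStrictMonotoneCycle := by
  obtain ⟨l', h⟩ := stmt0_general (fun x => (hpos x).ne') hsmc hfe hfebar hcan
  exact ⟨l', e, h⟩
end

section
/- There do not exist integers a, b, c and k such that, in the rational numbers, 30·(15/7)^a·(5/2)^b·(4/5)^c = 21·k. -/
/-!
Among the generating moduli `15/7`, `5/2`, `4/5`, only the first involves the primes `3` and `7`,
and it does so with opposite valuations. Hence `30·(15/7)^a·(5/2)^b·(4/5)^c` has `3`-adic valuation
`1 + a` and `7`-adic valuation `-a`; these sum to `1`, so they cannot both be at least `1`,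
as they would be for a nonzero integer divisible by `21`.
-/

section PadicValuation

variable {p : ℕ} [Fact p.Prime]

theorem padicValRat_eq_of_eq_zpow_mul_div {q : ℚ} {e m n : ℤ} (hq : q = p ^ e * (m / n))
    (hm : ¬ (p : ℤ) ∣ m) (hn : ¬ (p : ℤ) ∣ n) : padicValRat p q = e := by
  have hp : (p : ℚ) ≠ 0 := Nat.cast_ne_zero.mpr (Fact.out : p.Prime).ne_zero
  have hm₀ : (m : ℚ) ≠ 0 := Int.cast_ne_zero.mpr fun h ↦ hm (h ▸ dvd_zero _)
  have hn₀ : (n : ℚ) ≠ 0 := Int.cast_ne_zero.mpr fun h ↦ hn (h ▸ dvd_zero _)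
  rw [hq, padicValRat.mul (zpow_ne_zero e hp) (div_ne_zero hm₀ hn₀), padicValRat.zpow,
    padicValRat.self (Fact.out : p.Prime).one_lt, padicValRat.div hm₀ hn₀, padicValRat.of_int,
    padicValRat.of_int, padicValInt.eq_zero_of_not_dvd hm, padicValInt.eq_zero_of_not_dvd hn]
  simp only [mul_one, sub_self, add_zero]

theorem one_le_padicValRat_intCast_of_dvd {z : ℤ} (hz : z ≠ 0) (hpz : (p : ℤ) ∣ z) :
    1 ≤ padicValRat p z := by
  have h : 1 ≤ padicValInt p z :=
    ((padicValInt_dvd_iff 1 z).mp (by rwa [pow_one])).resolve_left hz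
  rw [padicValRat.of_int]
  exact_mod_cast h

end PadicValuation

instance fact_prime_seven : Fact (Nat.Prime 7) :=
  ⟨by norm_num⟩

/-- The modulus of a slide path for the edge `f₄` of the 4-rose, where `a`, `b` and `c` are the
exponents of the generating moduli `15/7`, `5/2` and `4/5`. -/
def slideModulus (a b c : ℤ) : ℚ :=
  (15 / 7) ^ a * (5 / 2) ^ b * (4 / 5) ^ c

namespace slideModulus

theorem ne_zero (a b c : ℤ) : slideModulus a b c ≠ 0 := by
  unfold slideModulus
  positivity

theorem padicValRat_eq (p : ℕ) [Fact p.Prime] (a b c : ℤ) :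
    padicValRat p (slideModulus a b c) =
      a * padicValRat p (15 / 7) + b * padicValRat p (5 / 2) + c * padicValRat p (4 / 5) := by
  rw [slideModulus, padicValRat.mul (by positivity) (by positivity),
    padicValRat.mul (by positivity) (by positivity), padicValRat.zpow, padicValRat.zpow,
    padicValRat.zpow]

theorem padicValRat_three (a b c : ℤ) : padicValRat 3 (slideModulus a b c) = a := by
  have h₁ : padicValRat 3 (15 / 7) = 1 :=
    padicValRat_eq_of_eq_zpow_mul_div (m := 5) (n := 7) (by norm_num) (by norm_num) (by norm_num)
  have h₂ : padicValRat 3 (5 / 2) = 0 :=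
    padicValRat_eq_of_eq_zpow_mul_div (m := 5) (n := 2) (by norm_num) (by norm_num) (by norm_num)
  have h₃ : padicValRat 3 (4 / 5) = 0 :=
    padicValRat_eq_of_eq_zpow_mul_div (m := 4) (n := 5) (by norm_num) (by norm_num) (by norm_num)
  rw [padicValRat_eq, h₁, h₂, h₃]
  ring

theorem padicValRat_seven (a b c : ℤ) : padicValRat 7 (slideModulus a b c) = -a := by
  have h₁ : padicValRat 7 (15 / 7) = -1 :=
    padicValRat_eq_of_eq_zpow_mul_div (m := 15) (n := 1) (by norm_num) (by norm_num) (by norm_num)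
  have h₂ : padicValRat 7 (5 / 2) = 0 :=
    padicValRat_eq_of_eq_zpow_mul_div (m := 5) (n := 2) (by norm_num) (by norm_num) (by norm_num)
  have h₃ : padicValRat 7 (4 / 5) = 0 :=
    padicValRat_eq_of_eq_zpow_mul_div (m := 4) (n := 5) (by norm_num) (by norm_num) (by norm_num)
  rw [padicValRat_eq, h₁, h₂, h₃]
  ring

theorem padicValRat_three_thirty_mul (a b c : ℤ) :
    padicValRat 3 (30 * slideModulus a b c) = 1 + a := by
  have h : padicValRat 3 30 = 1 :=
    padicValRat_eq_of_eq_zpow_mul_div (m := 10) (n := 1) (by norm_num) (by norm_num) (by norm_num)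
  rw [padicValRat.mul (by norm_num) (ne_zero a b c), h, padicValRat_three]

theorem padicValRat_seven_thirty_mul (a b c : ℤ) :
    padicValRat 7 (30 * slideModulus a b c) = -a := by
  have h : padicValRat 7 30 = 0 :=
    padicValRat_eq_of_eq_zpow_mul_div (m := 30) (n := 1) (by norm_num) (by norm_num) (by norm_num)
  rw [padicValRat.mul (by norm_num) (ne_zero a b c), h, padicValRat_seven, zero_add]

end slideModulus

/-- There are no integers `a, b, c, k` with
`30·(15/7)^a·(5/2)^b·(4/5)^c = 21·k` in `ℚ`. -/
theorem stmt4 :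
    ¬ ∃ (a b c k : ℤ),
      (30 : ℚ) * (15 / 7 : ℚ) ^ a * (5 / 2 : ℚ) ^ b * (4 / 5 : ℚ) ^ c = 21 * (k : ℚ) := by
  rintro ⟨a, b, c, k, h⟩
  have hk : 30 * slideModulus a b c = (21 * k : ℤ) := by
    push_cast
    rw [← h, slideModulus]
    ring
  have hk₀ : 21 * k ≠ 0 :=
    Int.cast_ne_zero.mp (hk ▸ mul_ne_zero (by norm_num) (slideModulus.ne_zero a b c))
  have one_le_val_three : 1 ≤ padicValRat 3 (21 * k : ℤ) :=
    one_le_padicValRat_intCast_of_dvd hk₀ (Dvd.dvd.mul_right (by norm_num) k)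
  have one_le_val_seven : 1 ≤ padicValRat 7 (21 * k : ℤ) :=
    one_le_padicValRat_intCast_of_dvd hk₀ (Dvd.dvd.mul_right (by norm_num) k)
  rw [← hk, slideModulus.padicValRat_three_thirty_mul] at one_le_val_three
  rw [← hk, slideModulus.padicValRat_seven_thirty_mul] at one_le_val_seven
  linarith
end
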